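/- Let P be a joint distribution on 𝒳 × 𝒴 × 𝒵. On the convex compact set Δ_P, the functions Q ↦ MI_Q(X:Y|Z), Q ↦ MI_Q(X:Z|Y) and Q ↦ MI_Q(X:(Y,Z)) are convex, and the functions Q ↦ CoI_Q(X;Y;Z) and Q ↦ H_Q(X|Y,Z) are concave. Consequently, the set of Q ∈ Δ_P minimizing MI_Q(X:(Y,Z)) over Δ_P is a convex subset of Δ_P. -/

import Mathlib

/-!
On `ΔP P` the `(X,Y)`- and `(X,Z)`-marginals, hence also the `X`-, `Y`- and `Z`-marginals, are
those of `P`. Splitting the logarithms, each of `MI(X:Y|Z)`, `MI(X:Z|Y)` and `MI(X:(Y,Z))` therefore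
equals `-H(X|Y,Z)` plus a constant depending only on `P`, and `CoI(X;Y;Z)` equals `H(X|Y,Z)` plus
such a constant. So everything reduces to the concavity of `H(X|Y,Z)`, that is, to the joint
convexity of `(q, r) ↦ q log (q / r)` (`mul_log_div_convex`), applied with `q = Q(x,y,z)` and
`r = Q(y,z)`, which is linear in `Q`. The minimizers of a convex function form a convex set.
-/

open scoped BigOperators
open Real

namespace PID

variable {𝒳 𝒴 𝒵 : Type*} [Fintype 𝒳] [Fintype 𝒴] [Fintype 𝒵]

/-- A joint distribution on `𝒳 × 𝒴 × 𝒵`: nonnegative values summing to 1. -/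
def IsDist (P : 𝒳 × 𝒴 × 𝒵 → ℝ) : Prop :=
  (∀ p, 0 ≤ P p) ∧ ∑ p, P p = 1

noncomputable def margX (P : 𝒳 × 𝒴 × 𝒵 → ℝ) (x : 𝒳) : ℝ := ∑ y, ∑ z, P (x, y, z)
noncomputable def margY (P : 𝒳 × 𝒴 × 𝒵 → ℝ) (y : 𝒴) : ℝ := ∑ x, ∑ z, P (x, y, z)
noncomputable def margZ (P : 𝒳 × 𝒴 × 𝒵 → ℝ) (z : 𝒵) : ℝ := ∑ x, ∑ y, P (x, y, z)
noncomputable def margXY (P : 𝒳 × 𝒴 × 𝒵 → ℝ) (x : 𝒳) (y : 𝒴) : ℝ := ∑ z, P (x, y, z)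
noncomputable def margXZ (P : 𝒳 × 𝒴 × 𝒵 → ℝ) (x : 𝒳) (z : 𝒵) : ℝ := ∑ y, P (x, y, z)
noncomputable def margYZ (P : 𝒳 × 𝒴 × 𝒵 → ℝ) (y : 𝒴) (z : 𝒵) : ℝ := ∑ x, P (x, y, z)

/-- Mutual information `MI(X:Y)`. -/
noncomputable def miXY (P : 𝒳 × 𝒴 × 𝒵 → ℝ) : ℝ :=
  ∑ x, ∑ y, margXY P x y * Real.log (margXY P x y / (margX P x * margY P y))

/-- Mutual information `MI(X:Z)`. -/
noncomputable def miXZ (P : 𝒳 × 𝒴 × 𝒵 → ℝ) : ℝ :=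
  ∑ x, ∑ z, margXZ P x z * Real.log (margXZ P x z / (margX P x * margZ P z))

/-- Mutual information `MI(Y:Z)`. -/
noncomputable def miYZ (P : 𝒳 × 𝒴 × 𝒵 → ℝ) : ℝ :=
  ∑ y, ∑ z, margYZ P y z * Real.log (margYZ P y z / (margY P y * margZ P z))

/-- Mutual information `MI(X:(Y,Z))`. -/
noncomputable def miXYZ (P : 𝒳 × 𝒴 × 𝒵 → ℝ) : ℝ :=
  ∑ x, ∑ y, ∑ z, P (x, y, z) * Real.log (P (x, y, z) / (margX P x * margYZ P y z))

/-- Conditional mutual information `MI(X:Y|Z)`. -/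
noncomputable def miXY_Z (P : 𝒳 × 𝒴 × 𝒵 → ℝ) : ℝ :=
  ∑ x, ∑ y, ∑ z, P (x, y, z) *
    Real.log (P (x, y, z) * margZ P z / (margXZ P x z * margYZ P y z))

/-- Conditional mutual information `MI(X:Z|Y)`. -/
noncomputable def miXZ_Y (P : 𝒳 × 𝒴 × 𝒵 → ℝ) : ℝ :=
  ∑ x, ∑ y, ∑ z, P (x, y, z) *
    Real.log (P (x, y, z) * margY P y / (margXY P x y * margYZ P y z))

/-- Conditional mutual information `MI(Y:Z|X)`. -/
noncomputable def miYZ_X (P : 𝒳 × 𝒴 × 𝒵 → ℝ) : ℝ :=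
  ∑ x, ∑ y, ∑ z, P (x, y, z) *
    Real.log (P (x, y, z) * margX P x / (margXY P x y * margXZ P x z))

/-- Conditional entropy `H(X|Y,Z)`. -/
noncomputable def hX_YZ (P : 𝒳 × 𝒴 × 𝒵 → ℝ) : ℝ :=
  -∑ x, ∑ y, ∑ z, P (x, y, z) * Real.log (P (x, y, z) / margYZ P y z)

/-- Conditional entropy `H(X|Z)`. -/
noncomputable def hX_Z (P : 𝒳 × 𝒴 × 𝒵 → ℝ) : ℝ :=
  -∑ x, ∑ z, margXZ P x z * Real.log (margXZ P x z / margZ P z)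

/-- Conditional entropy `H(Y|Z)`. -/
noncomputable def hY_Z (P : 𝒳 × 𝒴 × 𝒵 → ℝ) : ℝ :=
  -∑ y, ∑ z, margYZ P y z * Real.log (margYZ P y z / margZ P z)

/-- Conditional entropy `H(Z|Y)`. -/
noncomputable def hZ_Y (P : 𝒳 × 𝒴 × 𝒵 → ℝ) : ℝ :=
  -∑ y, ∑ z, margYZ P y z * Real.log (margYZ P y z / margY P y)

/-- Co-information `CoI(X;Y;Z) = MI(X:Y) − MI(X:Y|Z)`. -/
noncomputable def coI (P : 𝒳 × 𝒴 × 𝒵 → ℝ) : ℝ := miXY P - miXY_Z P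

/-- `Δ_P`: the joint distributions with the same pair marginals as `P` on `(X,Y)` and `(X,Z)`. -/
def ΔP (P : 𝒳 × 𝒴 × 𝒵 → ℝ) : Set (𝒳 × 𝒴 × 𝒵 → ℝ) :=
  {Q | IsDist Q ∧ (∀ x y, margXY Q x y = margXY P x y) ∧ ∀ x z, margXZ Q x z = margXZ P x z}

/-- `ŨI(X:Y∖Z) = min_{Q ∈ Δ_P} MI_Q(X:Y|Z)`. -/
noncomputable def UIY (P : 𝒳 × 𝒴 × 𝒵 → ℝ) : ℝ := sInf (miXY_Z '' ΔP P)

/-- `ŨI(X:Z∖Y) = min_{Q ∈ Δ_P} MI_Q(X:Z|Y)`. -/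
noncomputable def UIZ (P : 𝒳 × 𝒴 × 𝒵 → ℝ) : ℝ := sInf (miXZ_Y '' ΔP P)

/-- `S̃I(X:Y;Z) = max_{Q ∈ Δ_P} CoI_Q(X;Y;Z)`. -/
noncomputable def SI (P : 𝒳 × 𝒴 × 𝒵 → ℝ) : ℝ := sSup (coI '' ΔP P)

/-- `C̃I(X:Y;Z) = MI_P(X:(Y,Z)) − min_{Q ∈ Δ_P} MI_Q(X:(Y,Z))`. -/
noncomputable def CI (P : 𝒳 × 𝒴 × 𝒵 → ℝ) : ℝ := miXYZ P - sInf (miXYZ '' ΔP P)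

/-! ### Joint convexity of `(q, r) ↦ q log (q / r)` -/

/-- The function `(q, r) ↦ q log (q / r)` lies above its tangent plane along the ray `q = T * r`,
where the two agree. -/
lemma tangent_le_mul_log_div {q r T : ℝ} (hq : 0 ≤ q) (hqr : q ≤ r) (hT : 0 < T) :
    q * Real.log T + q - T * r ≤ q * Real.log (q / r) := by
  rcases hq.eq_or_lt with rfl | hq
  · have := mul_nonneg hT.le hqr
    simpa using this
  · have hr : 0 < r := hq.trans_le hqr
    have h := Real.log_le_sub_one_of_pos (show 0 < T * r / q by positivity)
    rw [Real.log_div (by positivity) hq.ne', Real.log_mul hT.ne' hr.ne'] at h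
    rw [Real.log_div hq.ne' hr.ne']
    have h2 := mul_le_mul_of_nonneg_left h hq.le
    have h3 : q * (T * r / q - 1) = T * r - q := by field_simp
    linarith

/-- Joint convexity of `(q, r) ↦ q log (q / r)` on `0 ≤ q ≤ r` (two-term log-sum inequality). -/
lemma mul_log_div_convex {q₁ r₁ q₂ r₂ a b : ℝ} (hq₁ : 0 ≤ q₁) (h₁ : q₁ ≤ r₁) (hq₂ : 0 ≤ q₂)
    (h₂ : q₂ ≤ r₂) (ha : 0 ≤ a) (hb : 0 ≤ b) :
    (a * q₁ + b * q₂) * Real.log ((a * q₁ + b * q₂) / (a * r₁ + b * r₂)) ≤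
      a * (q₁ * Real.log (q₁ / r₁)) + b * (q₂ * Real.log (q₂ / r₂)) := by
  have ha1 : 0 ≤ a * q₁ := mul_nonneg ha hq₁
  have hb2 : 0 ≤ b * q₂ := mul_nonneg hb hq₂
  rcases (add_nonneg ha1 hb2).eq_or_lt with h | hq
  · have e₁ : a * q₁ = 0 := by linarith
    have e₂ : b * q₂ = 0 := by linarith
    simp [← mul_assoc, e₁, e₂]
  · have hr : 0 < a * r₁ + b * r₂ := by
      have := mul_le_mul_of_nonneg_left h₁ ha
      have := mul_le_mul_of_nonneg_left h₂ hb
      linarith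
    -- Both tangent bounds are taken at the slope of the averaged point, where they are sharp.
    set T := (a * q₁ + b * q₂) / (a * r₁ + b * r₂) with hTdef
    have hT : 0 < T := div_pos hq hr
    have hTr : T * (a * r₁ + b * r₂) = a * q₁ + b * q₂ := div_mul_cancel₀ _ hr.ne'
    have t₁ := mul_le_mul_of_nonneg_left (tangent_le_mul_log_div hq₁ h₁ hT) ha
    have t₂ := mul_le_mul_of_nonneg_left (tangent_le_mul_log_div hq₂ h₂ hT) hb
    linarith

/-! ### Marginals on `ΔP` -/

lemma le_margYZ {Q : 𝒳 × 𝒴 × 𝒵 → ℝ} (hQ : ∀ p, 0 ≤ Q p) (x : 𝒳) (y : 𝒴) (z : 𝒵) :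
    Q (x, y, z) ≤ margYZ Q y z :=
  Finset.single_le_sum (f := fun x => Q (x, y, z)) (fun _ _ => hQ _) (Finset.mem_univ x)

lemma le_margXY {Q : 𝒳 × 𝒴 × 𝒵 → ℝ} (hQ : ∀ p, 0 ≤ Q p) (x : 𝒳) (y : 𝒴) (z : 𝒵) :
    Q (x, y, z) ≤ margXY Q x y :=
  Finset.single_le_sum (f := fun z => Q (x, y, z)) (fun _ _ => hQ _) (Finset.mem_univ z)

lemma le_margXZ {Q : 𝒳 × 𝒴 × 𝒵 → ℝ} (hQ : ∀ p, 0 ≤ Q p) (x : 𝒳) (y : 𝒴) (z : 𝒵) :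
    Q (x, y, z) ≤ margXZ Q x z :=
  Finset.single_le_sum (f := fun y => Q (x, y, z)) (fun _ _ => hQ _) (Finset.mem_univ y)

lemma margXY_le_margX {Q : 𝒳 × 𝒴 × 𝒵 → ℝ} (hQ : ∀ p, 0 ≤ Q p) (x : 𝒳) (y : 𝒴) :
    margXY Q x y ≤ margX Q x :=
  Finset.single_le_sum (f := fun y => margXY Q x y)
    (fun _ _ => Finset.sum_nonneg fun _ _ => hQ _) (Finset.mem_univ y)

lemma margXY_le_margY {Q : 𝒳 × 𝒴 × 𝒵 → ℝ} (hQ : ∀ p, 0 ≤ Q p) (x : 𝒳) (y : 𝒴) :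
    margXY Q x y ≤ margY Q y :=
  Finset.single_le_sum (f := fun x => margXY Q x y)
    (fun _ _ => Finset.sum_nonneg fun _ _ => hQ _) (Finset.mem_univ x)

lemma margXZ_le_margZ {Q : 𝒳 × 𝒴 × 𝒵 → ℝ} (hQ : ∀ p, 0 ≤ Q p) (x : 𝒳) (z : 𝒵) :
    margXZ Q x z ≤ margZ Q z :=
  Finset.single_le_sum (f := fun x => margXZ Q x z)
    (fun _ _ => Finset.sum_nonneg fun _ _ => hQ _) (Finset.mem_univ x)

lemma margX_eq {P Q : 𝒳 × 𝒴 × 𝒵 → ℝ} (hQ : Q ∈ ΔP P) (x : 𝒳) : margX Q x = margX P x :=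
  Finset.sum_congr rfl fun y _ => hQ.2.1 x y

lemma margY_eq {P Q : 𝒳 × 𝒴 × 𝒵 → ℝ} (hQ : Q ∈ ΔP P) (y : 𝒴) : margY Q y = margY P y :=
  Finset.sum_congr rfl fun x _ => hQ.2.1 x y

lemma margZ_eq {P Q : 𝒳 × 𝒴 × 𝒵 → ℝ} (hQ : Q ∈ ΔP P) (z : 𝒵) : margZ Q z = margZ P z :=
  Finset.sum_congr rfl fun x _ => hQ.2.2 x z

/-! ### Reduction to the conditional entropy of `X` given `(Y, Z)` -/

/-- The logarithm splits only when its arguments are nonzero; the weight `q` vanishes in the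
remaining cases, so positivity of `c` and `u` is needed only for `q > 0`. -/
lemma mul_log_split {q c u : ℝ} (hc : 0 < q → 0 < c) (hu : 0 < q → 0 < u) (hq : 0 ≤ q) :
    q * Real.log (q / c * u) = q * Real.log (q / c) + q * Real.log u := by
  rcases hq.eq_or_lt with rfl | hq
  · simp
  · rw [Real.log_mul (div_pos hq (hc hq)).ne' (hu hq).ne', mul_add]

/-- The constant is the entropy of `X`: `MI(X:(Y,Z)) = H(X) - H(X|Y,Z)`. -/
lemma miXYZ_eq {P Q : 𝒳 × 𝒴 × 𝒵 → ℝ} (hQ : Q ∈ ΔP P) :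
    miXYZ Q = -hX_YZ Q + ∑ x, margX P x * Real.log (margX P x)⁻¹ := by
  have h0 := hQ.1.1
  have e : ∑ x, margX P x * Real.log (margX P x)⁻¹ =
      ∑ x, ∑ y, ∑ z, Q (x, y, z) * Real.log (margX Q x)⁻¹ := by
    simp only [← margX_eq hQ, ← Finset.sum_mul]
    rfl
  rw [e, miXYZ, hX_YZ, neg_neg]
  simp only [← Finset.sum_add_distrib]
  refine Finset.sum_congr rfl fun x _ => Finset.sum_congr rfl fun y _ =>
    Finset.sum_congr rfl fun z _ => ?_
  rw [← mul_log_split (fun h => h.trans_le (le_margYZ h0 x y z))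
    (fun h => inv_pos.2 (h.trans_le ((le_margXY h0 x y z).trans (margXY_le_margX h0 x y))))
    (h0 _)]
  congr 2
  rw [div_mul_eq_div_div, div_right_comm, div_eq_mul_inv _ (margX Q x)]

/-- The constant is `H(X|Z)`: `MI(X:Y|Z) = H(X|Z) - H(X|Y,Z)`. -/
lemma miXY_Z_eq {P Q : 𝒳 × 𝒴 × 𝒵 → ℝ} (hQ : Q ∈ ΔP P) :
    miXY_Z Q = -hX_YZ Q + ∑ x, ∑ z, margXZ P x z * Real.log (margZ P z / margXZ P x z) := by
  have h0 := hQ.1.1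
  have e : ∑ x, ∑ z, margXZ P x z * Real.log (margZ P z / margXZ P x z) =
      ∑ x, ∑ y, ∑ z, Q (x, y, z) * Real.log (margZ Q z / margXZ Q x z) := by
    refine Finset.sum_congr rfl fun x _ => ?_
    rw [Finset.sum_comm]
    simp only [← margZ_eq hQ, ← hQ.2.2, ← Finset.sum_mul]
    rfl
  rw [e, miXY_Z, hX_YZ, neg_neg]
  simp only [← Finset.sum_add_distrib]
  refine Finset.sum_congr rfl fun x _ => Finset.sum_congr rfl fun y _ =>
    Finset.sum_congr rfl fun z _ => ?_
  rw [← mul_log_split (fun h => h.trans_le (le_margYZ h0 x y z))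
    (fun h => div_pos (h.trans_le ((le_margXZ h0 x y z).trans (margXZ_le_margZ h0 x z)))
      (h.trans_le (le_margXZ h0 x y z)))
    (h0 _)]
  congr 2
  rw [div_mul_div_comm, mul_comm (margYZ Q y z)]

/-- The constant is `H(X|Y)`: `MI(X:Z|Y) = H(X|Y) - H(X|Y,Z)`. -/
lemma miXZ_Y_eq {P Q : 𝒳 × 𝒴 × 𝒵 → ℝ} (hQ : Q ∈ ΔP P) :
    miXZ_Y Q = -hX_YZ Q + ∑ x, ∑ y, margXY P x y * Real.log (margY P y / margXY P x y) := by
  have h0 := hQ.1.1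
  have e : ∑ x, ∑ y, margXY P x y * Real.log (margY P y / margXY P x y) =
      ∑ x, ∑ y, ∑ z, Q (x, y, z) * Real.log (margY Q y / margXY Q x y) := by
    simp only [← margY_eq hQ, ← hQ.2.1, ← Finset.sum_mul]
    rfl
  rw [e, miXZ_Y, hX_YZ, neg_neg]
  simp only [← Finset.sum_add_distrib]
  refine Finset.sum_congr rfl fun x _ => Finset.sum_congr rfl fun y _ =>
    Finset.sum_congr rfl fun z _ => ?_
  rw [← mul_log_split (fun h => h.trans_le (le_margYZ h0 x y z))
    (fun h => div_pos (h.trans_le ((le_margXY h0 x y z).trans (margXY_le_margY h0 x y)))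
      (h.trans_le (le_margXY h0 x y z)))
    (h0 _)]
  congr 2
  rw [div_mul_div_comm, mul_comm (margYZ Q y z)]

lemma miXY_eq {P Q : 𝒳 × 𝒴 × 𝒵 → ℝ} (hQ : Q ∈ ΔP P) : miXY Q = miXY P := by
  simp only [miXY, hQ.2.1, margX_eq hQ, margY_eq hQ]

/-! ### Convexity -/

lemma convex_ΔP (P : 𝒳 × 𝒴 × 𝒵 → ℝ) : Convex ℝ (ΔP P) := by
  intro Q₁ h₁ Q₂ h₂ a b ha hb hab
  refine ⟨⟨fun p => ?_, ?_⟩, fun x y => ?_, fun x z => ?_⟩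
  · exact add_nonneg (mul_nonneg ha (h₁.1.1 p)) (mul_nonneg hb (h₂.1.1 p))
  · simp only [Pi.add_apply, Pi.smul_apply, smul_eq_mul, Finset.sum_add_distrib,
      ← Finset.mul_sum, h₁.1.2, h₂.1.2, mul_one, hab]
  · have e₁ := h₁.2.1 x y
    have e₂ := h₂.2.1 x y
    simp only [margXY, Pi.add_apply, Pi.smul_apply, smul_eq_mul, Finset.sum_add_distrib,
      ← Finset.mul_sum] at e₁ e₂ ⊢
    rw [e₁, e₂, ← add_mul, hab, one_mul]
  · have e₁ := h₁.2.2 x z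
    have e₂ := h₂.2.2 x z
    simp only [margXZ, Pi.add_apply, Pi.smul_apply, smul_eq_mul, Finset.sum_add_distrib,
      ← Finset.mul_sum] at e₁ e₂ ⊢
    rw [e₁, e₂, ← add_mul, hab, one_mul]

lemma concaveOn_hX_YZ (P : 𝒳 × 𝒴 × 𝒵 → ℝ) : ConcaveOn ℝ (ΔP P) hX_YZ := by
  refine ⟨convex_ΔP P, fun Q₁ h₁ Q₂ h₂ a b ha hb _ => ?_⟩
  simp only [hX_YZ, smul_eq_mul, mul_neg, ← neg_add, neg_le_neg_iff, Finset.mul_sum,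
    ← Finset.sum_add_distrib]
  refine Finset.sum_le_sum fun x _ => Finset.sum_le_sum fun y _ => Finset.sum_le_sum fun z _ => ?_
  have e : margYZ (a • Q₁ + b • Q₂) y z = a * margYZ Q₁ y z + b * margYZ Q₂ y z := by
    simp only [margYZ, Pi.add_apply, Pi.smul_apply, smul_eq_mul, Finset.sum_add_distrib,
      ← Finset.mul_sum]
  rw [e]
  exact mul_log_div_convex (h₁.1.1 _) (le_margYZ h₁.1.1 x y z) (h₂.1.1 _)
    (le_margYZ h₂.1.1 x y z) ha hb

lemma convexOn_neg_hX_YZ_add_const (P : 𝒳 × 𝒴 × 𝒵 → ℝ) (c : ℝ) :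
    ConvexOn ℝ (ΔP P) fun Q => -hX_YZ Q + c :=
  (concaveOn_hX_YZ P).neg.add_const c

/-- convexity/concavity on `Δ_P`, and convexity of the set of minimizers. -/
theorem stmt1 [Nonempty 𝒳] [Nonempty 𝒴] [Nonempty 𝒵]
    (P : 𝒳 × 𝒴 × 𝒵 → ℝ) (hP : IsDist P) :
    ConvexOn ℝ (ΔP P) miXY_Z ∧ ConvexOn ℝ (ΔP P) miXZ_Y ∧ ConvexOn ℝ (ΔP P) miXYZ ∧
    ConcaveOn ℝ (ΔP P) coI ∧ ConcaveOn ℝ (ΔP P) hX_YZ ∧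
    Convex ℝ {Q ∈ ΔP P | ∀ Q' ∈ ΔP P, miXYZ Q ≤ miXYZ Q'} := by
  have hXYZ : ConvexOn ℝ (ΔP P) miXYZ :=
    (convexOn_neg_hX_YZ_add_const P _).congr fun Q hQ => (miXYZ_eq hQ).symm
  have hXY_Z : ConvexOn ℝ (ΔP P) miXY_Z :=
    (convexOn_neg_hX_YZ_add_const P _).congr fun Q hQ => (miXY_Z_eq hQ).symm
  have hXZ_Y : ConvexOn ℝ (ΔP P) miXZ_Y :=
    (convexOn_neg_hX_YZ_add_const P _).congr fun Q hQ => (miXZ_Y_eq hQ).symm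
  refine ⟨hXY_Z, hXZ_Y, hXYZ, ?_, concaveOn_hX_YZ P, ?_⟩
  · refine (hXY_Z.neg.add_const (miXY P)).congr fun Q hQ => ?_
    simp only [coI, miXY_eq hQ, Pi.add_apply, Pi.neg_apply]
    ring
  · intro Q₁ h₁ Q₂ h₂ a b ha hb hab
    -- The set of minimizers is cut out by the sublevel sets at the values `miXYZ Q'`.
    exact ⟨convex_ΔP P h₁.1 h₂.1 ha hb hab, fun Q' hQ' =>
      (hXYZ.convex_le (miXYZ Q') ⟨h₁.1, h₁.2 Q' hQ'⟩ ⟨h₂.1, h₂.2 Q' hQ'⟩ ha hb hab).2⟩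

end PID
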